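/- (Composition preserves totality) Let bl-graphs G and H be total with respect to the sharing-free named sequents ⊢Γ,A and ⊢Γ,Ā respectively. Then the composite G ⊙_A H is total with respect to the sequent ⊢Γ. -/

import Mathlib

open scoped Classical

noncomputable section

namespace GS4

/-- Named classical propositional formulas over atoms `α`, with names in `ℕ`. -/
inductive NForm (α : Type) : Type
  | atom : ℕ → α → NForm α
  | or   : NForm α → NForm α → NForm α
  | and  : NForm α → NForm α → NForm α

variable {α : Type}

/-- Name-preserving De Morgan negation, w.r.t. an involution `bar` on atoms. -/
def negF (bar : α → α) : NForm α → NForm α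
  | .atom x a => .atom x (bar a)
  | .or A B => .and (negF bar A) (negF bar B)
  | .and A B => .or (negF bar A) (negF bar B)

/-- The set of names occurring in a named formula. -/
def NForm.names : NForm α → Set ℕ
  | .atom x _ => {x}
  | .or A B => A.names ∪ B.names
  | .and A B => A.names ∪ B.names

/-- A named formula is sharing-free if every name occurs at most once in it. -/
def NForm.sharingFree : NForm α → Prop
  | .atom _ _ => True
  | .or A B => A.sharingFree ∧ B.sharingFree ∧ Disjoint A.names B.names
  | .and A B => A.sharingFree ∧ B.sharingFree ∧ Disjoint A.names B.names

def NForm.isAtom : NForm α → Prop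
  | .atom _ _ => True
  | _ => False

/-- Anonymous formulas (shapes): `A ≡ B` iff their shapes coincide. -/
inductive Shape (α : Type) : Type
  | atom : α → Shape α
  | or   : Shape α → Shape α → Shape α
  | and  : Shape α → Shape α → Shape α

def NForm.shape : NForm α → Shape α
  | .atom _ a => .atom a
  | .or A B => .or A.shape B.shape
  | .and A B => .and A.shape B.shape

/-- `HasAtom A x a`: the atomic formula `x:a` occurs in `A`. -/
def HasAtom : NForm α → ℕ → α → Prop
  | .atom y b, x, a => y = x ∧ b = a
  | .or A B, x, a => HasAtom A x a ∨ HasAtom B x a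
  | .and A B, x, a => HasAtom A x a ∨ HasAtom B x a

/-- Names of a finite set of named formulas. -/
def snames (Γ : Finset (NForm α)) : Set ℕ := ⋃ A ∈ Γ, A.names

/-- A finite set of named formulas is sharing-free if all its elements are
sharing-free with pairwise disjoint name sets. -/
def SFSet (Γ : Finset (NForm α)) : Prop :=
  (∀ A ∈ Γ, A.sharingFree) ∧
  ∀ A ∈ Γ, ∀ B ∈ Γ, A ≠ B → Disjoint A.names B.names

/-- `x:a` occurs in some formula of `Γ` (i.e. `Γ[x] = a` for sharing-free `Γ`). -/
def HasAtomS (Γ : Finset (NForm α)) (x : ℕ) (a : α) : Prop :=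
  ∃ A ∈ Γ, HasAtom A x a

/-- Branch sets of named formulas. -/
def BrF : NForm α → Set (Set ℕ)
  | .atom x _ => {{x}}
  | .or A B => {X | ∃ Y ∈ BrF A, ∃ Z ∈ BrF B, X = Y ∪ Z}
  | .and A B => BrF A ∪ BrF B

/-- Branch sets of sequents (finite sharing-free sets of named formulas). -/
def BrS (Γ : Finset (NForm α)) : Set (Set ℕ) :=
  {X | X ⊆ snames Γ ∧ ∀ A ∈ Γ, X ∩ A.names ∈ BrF A}

/-! ## Branch-labeled name graphs -/

/-- A branch-labeled name graph: vertices and a relation between unordered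
pairs of vertices and branch labels. -/
structure BLGraph : Type where
  verts : Set ℕ
  rel : Sym2 ℕ → Set ℕ → Prop

/-- Well-formedness of a bl-graph: related pairs consist of distinct vertices,
labels are sets of vertices, and each edge is included in its labels. -/
def BLGraph.IsBL (G : BLGraph) : Prop :=
  ∀ e X, G.rel e X → ¬ e.IsDiag ∧ X ⊆ G.verts ∧ ∀ v ∈ e, v ∈ X

def BLGraph.Edges (G : BLGraph) : Set (Sym2 ℕ) := {e | ∃ X, G.rel e X}

def BLGraph.Br (G : BLGraph) : Set (Set ℕ) := {X | ∃ e, G.rel e X}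

def BLGraph.union (G H : BLGraph) : BLGraph :=
  ⟨G.verts ∪ H.verts, fun e X => G.rel e X ∨ H.rel e X⟩

/-- Restriction `G↾_S` of a bl-graph. -/
def BLGraph.restrict (G : BLGraph) (S : Set ℕ) : BLGraph :=
  ⟨G.verts ∩ S, fun e X => G.rel e X ∧ X ⊆ S⟩

/-- The interface-relativized edge-branch relation `e ⊰^I_G X`. -/
def BLGraph.relI (G : BLGraph) (I : Set ℕ) (e : Sym2 ℕ) (X : Set ℕ) : Prop :=
  ∃ Y, G.rel e Y ∧ X = Y \ I

/-- `z 0, …, z (n-1)` is an `X`-labeled alternating path between `G` and `H`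
through the interface `I`. -/
def AltPath (G H : BLGraph) (I X : Set ℕ) (n : ℕ) (z : ℕ → ℕ) : Prop :=
  1 < n ∧
  (∀ i < n, ∀ j < n, z i = z j → i = j) ∧
  (∀ i, 0 < i → i + 1 < n → z i ∈ I) ∧
  ((∀ i, i + 1 < n →
      (Even i → G.relI I s(z i, z (i + 1)) X) ∧ (¬ Even i → H.relI I s(z i, z (i + 1)) X)) ∨
   (∀ i, i + 1 < n →
      (Even i → H.relI I s(z i, z (i + 1)) X) ∧ (¬ Even i → G.relI I s(z i, z (i + 1)) X)))

/-- Composition of bl-graphs over an interface `I`. -/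
def BLGraph.comp (G H : BLGraph) (I : Set ℕ) : BLGraph :=
  ⟨(G.verts ∪ H.verts) \ I,
   fun e X => ∃ n z, AltPath G H I X n z ∧ z 0 ∉ I ∧ z (n - 1) ∉ I ∧
     e = s(z 0, z (n - 1))⟩

/-- The weakening operator on bl-graphs: add vertices `V` and extend every
branch label by a member of `Brs`. -/
def blwk (V : Set ℕ) (Brs : Set (Set ℕ)) (G : BLGraph) : BLGraph :=
  ⟨G.verts ∪ V, fun e X => ∃ Y Z, G.rel e Y ∧ Z ∈ Brs ∧ X = Y ∪ Z⟩

/-- The bl-identity graph `id_{A,C}` on a pair of dual formulas. -/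
def blid : NForm α → NForm α → BLGraph
  | .atom x _, .atom y _ => ⟨{x, y}, fun e X => e = s(x, y) ∧ X = {x, y}⟩
  | .or A1 A2, .and C1 C2 =>
      (blwk A2.names (BrF A2) (blid A1 C1)).union (blwk A1.names (BrF A1) (blid A2 C2))
  | .and A1 A2, .or C1 C2 =>
      (blwk C2.names (BrF C2) (blid A1 C1)).union (blwk C1.names (BrF C1) (blid A2 C2))
  | _, _ => ⟨∅, fun _ _ => False⟩

/-! ## Simple name graphs -/

/-- A simple name graph. -/
structure NGraph : Type where
  verts : Set ℕ
  edges : Set (Sym2 ℕ)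

/-- Subgraph relation `H ⊑ G`. -/
def NGraph.Sub (H G : NGraph) : Prop := H.verts ⊆ G.verts ∧ H.edges ⊆ G.edges

def NGraph.union (G H : NGraph) : NGraph := ⟨G.verts ∪ H.verts, G.edges ∪ H.edges⟩

/-- Induced subgraph `G↾_S`. -/
def NGraph.restrict (G : NGraph) (S : Set ℕ) : NGraph :=
  ⟨G.verts ∩ S, {e ∈ G.edges | ∀ v ∈ e, v ∈ S}⟩

/-- Alternating paths between simple name graphs through an interface. -/
def NAltPath (G H : NGraph) (I : Set ℕ) (n : ℕ) (z : ℕ → ℕ) : Prop :=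
  0 < n ∧
  (∀ i < n, ∀ j < n, z i = z j → i = j) ∧
  (∀ i, 0 < i → i + 1 < n → z i ∈ I) ∧
  ((∀ i, i + 1 < n →
      (Even i → s(z i, z (i + 1)) ∈ G.edges) ∧ (¬ Even i → s(z i, z (i + 1)) ∈ H.edges)) ∨
   (∀ i, i + 1 < n →
      (Even i → s(z i, z (i + 1)) ∈ H.edges) ∧ (¬ Even i → s(z i, z (i + 1)) ∈ G.edges)))

/-- Composition of simple name graphs over an interface. -/
def NGraph.comp (G H : NGraph) (I : Set ℕ) : NGraph :=
  ⟨(G.verts ∪ H.verts) \ I,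
   {e | ∃ x y, x ≠ y ∧ x ∈ (G.verts ∪ H.verts) \ I ∧ y ∈ (G.verts ∪ H.verts) \ I ∧
        e = s(x, y) ∧ ∃ n z, NAltPath G H I n z ∧ z 0 = x ∧ z (n - 1) = y}⟩

/-- The identity graph `Id_{A,C}` on a pair of dual formulas. -/
def idg : NForm α → NForm α → NGraph
  | .atom x _, .atom y _ => ⟨{x, y}, {s(x, y)}⟩
  | .or A1 A2, .and C1 C2 => (idg A1 C1).union (idg A2 C2)
  | .and A1 A2, .or C1 C2 => (idg A1 C1).union (idg A2 C2)
  | _, _ => ⟨∅, ∅⟩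

/-- The edgeless (weakening) graph on the names of `Γ`. -/
def wkg (Γ : Finset (NForm α)) : NGraph := ⟨snames Γ, ∅⟩

/-! ## Named GS4 derivations -/

/-- Named GS4 derivation trees. -/
inductive Deriv (α : Type) : Type
  | ax (Γ : Finset (NForm α)) (A C : NForm α)
  | cut (A : NForm α) (P Q : Deriv α)
  | sup (P Q : Deriv α)
  | orI (A B : NForm α) (P : Deriv α)
  | andI (A B : NForm α) (P Q : Deriv α)

/-- Conclusion of a derivation tree. -/
def concl : Deriv α → Finset (NForm α)
  | .ax Γ A C => insert A (insert C Γ)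
  | .cut A P _ => (concl P).erase A
  | .sup P _ => concl P
  | .orI A B P => insert (NForm.or A B) (((concl P).erase A).erase B)
  | .andI A B P _ => insert (NForm.and A B) ((concl P).erase A)

/-- Well-formedness of derivation trees w.r.t. the atom involution `bar`:
each rule is applied correctly to sharing-free named sequents. -/
def WF (bar : α → α) : Deriv α → Prop
  | .ax Γ A C =>
      A.shape = (negF bar C).shape ∧
      A.sharingFree ∧ C.sharingFree ∧ SFSet Γ ∧
      Disjoint A.names C.names ∧
      Disjoint A.names (snames Γ) ∧ Disjoint C.names (snames Γ)
  | .cut A P Q =>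
      WF bar P ∧ WF bar Q ∧
      ∃ Γ : Finset (NForm α), A ∉ Γ ∧ negF bar A ∉ Γ ∧
        concl P = insert A Γ ∧ concl Q = insert (negF bar A) Γ ∧
        A.sharingFree ∧ SFSet Γ ∧ Disjoint A.names (snames Γ)
  | .sup P Q => WF bar P ∧ WF bar Q ∧ concl P = concl Q
  | .orI A B P =>
      WF bar P ∧
      ∃ Γ : Finset (NForm α), A ∉ Γ ∧ B ∉ Γ ∧ A ≠ B ∧
        concl P = insert A (insert B Γ) ∧
        A.sharingFree ∧ B.sharingFree ∧ SFSet Γ ∧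
        Disjoint A.names B.names ∧
        Disjoint A.names (snames Γ) ∧ Disjoint B.names (snames Γ)
  | .andI A B P Q =>
      WF bar P ∧ WF bar Q ∧
      ∃ Γ : Finset (NForm α), A ∉ Γ ∧ B ∉ Γ ∧
        concl P = insert A Γ ∧ concl Q = insert B Γ ∧
        A.sharingFree ∧ B.sharingFree ∧ SFSet Γ ∧
        Disjoint A.names B.names ∧
        Disjoint A.names (snames Γ) ∧ Disjoint B.names (snames Γ)

/-- A derivation is cut-free if it contains no cut rule. -/
def CutFree : Deriv α → Prop
  | .ax _ _ _ => True
  | .cut _ _ _ => False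
  | .sup P Q => CutFree P ∧ CutFree Q
  | .orI _ _ P => CutFree P
  | .andI _ _ P Q => CutFree P ∧ CutFree Q

/-- The branch-labeled axiom graph `⟨⟨P⟩⟩` of a derivation. -/
def blaxg : Deriv α → BLGraph
  | .ax Γ A C => blwk (snames Γ) (BrS Γ) (blid A C)
  | .cut A P Q => BLGraph.comp (blaxg P) (blaxg Q) A.names
  | .sup P Q => (blaxg P).union (blaxg Q)
  | .orI _ _ P => blaxg P
  | .andI _ _ P Q => (blaxg P).union (blaxg Q)

/-- The (simple) axiom graph `⟦P⟧` of a derivation. -/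
def axg : Deriv α → NGraph
  | .ax Γ A C => (wkg Γ).union (idg A C)
  | .cut A P Q => NGraph.comp (axg P) (axg Q) A.names
  | .sup P Q => (axg P).union (axg Q)
  | .orI _ _ P => axg P
  | .andI _ _ P Q => (axg P).union (axg Q)

/-! ## Inversion and isolation -/

/-- Inversion of a disjunction `D ∨ E` in the conclusion. -/
def inv (D E : NForm α) : Deriv α → Deriv α
  | .ax Γ A C =>
      if A = NForm.or D E then
        match C with
        | .and C1 C2 =>
            .andI C1 C2 (.ax (insert E Γ) D C1) (.ax (insert D Γ) E C2)
        | _ => .ax Γ A C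
      else if C = NForm.or D E then
        match A with
        | .and A1 A2 =>
            .andI A1 A2 (.ax (insert E Γ) A1 D) (.ax (insert D Γ) A2 E)
        | _ => .ax Γ A C
      else
        .ax (insert D (insert E (Γ.erase (NForm.or D E)))) A C
  | .cut A P Q => .cut A (inv D E P) (inv D E Q)
  | .sup P Q => .sup (inv D E P) (inv D E Q)
  | .orI A B P => if A = D ∧ B = E then P else .orI A B (inv D E P)
  | .andI A B P Q => .andI A B (inv D E P) (inv D E Q)

/-- Left inversion of a conjunction `D ∧ E` in the conclusion. -/
def invl (D E : NForm α) : Deriv α → Deriv α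
  | .ax Γ A C =>
      if A = NForm.and D E then
        match C with
        | .or C1 C2 => .orI C1 C2 (.ax (insert C2 Γ) D C1)
        | _ => .ax Γ A C
      else if C = NForm.and D E then
        match A with
        | .or A1 A2 => .orI A1 A2 (.ax (insert A2 Γ) A1 D)
        | _ => .ax Γ A C
      else
        .ax (insert D (Γ.erase (NForm.and D E))) A C
  | .cut A P Q => .cut A (invl D E P) (invl D E Q)
  | .sup P Q => .sup (invl D E P) (invl D E Q)
  | .orI A B P => .orI A B (invl D E P)
  | .andI A B P Q => if A = D ∧ B = E then P else .andI A B (invl D E P) (invl D E Q)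

/-- Right inversion of a conjunction `D ∧ E` in the conclusion. -/
def invr (D E : NForm α) : Deriv α → Deriv α
  | .ax Γ A C =>
      if A = NForm.and D E then
        match C with
        | .or C1 C2 => .orI C1 C2 (.ax (insert C1 Γ) E C2)
        | _ => .ax Γ A C
      else if C = NForm.and D E then
        match A with
        | .or A1 A2 => .orI A1 A2 (.ax (insert A1 Γ) A2 E)
        | _ => .ax Γ A C
      else
        .ax (insert E (Γ.erase (NForm.and D E))) A C
  | .cut A P Q => .cut A (invr D E P) (invr D E Q)
  | .sup P Q => .sup (invr D E P) (invr D E Q)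
  | .orI A B P => .orI A B (invr D E P)
  | .andI A B P Q => if A = D ∧ B = E then Q else .andI A B (invr D E P) (invr D E Q)

/-- Isolation of a non-atomic formula in the conclusion. -/
def isl : NForm α → Deriv α → Deriv α
  | .or A B, P => .orI A B (inv A B P)
  | .and A B, P => .andI A B (invl A B P) (invr A B P)
  | .atom _ _, P => P

/-- Totality of a bl-graph w.r.t. a sharing-free named sequent. -/
def Total (bar : α → α) (G : BLGraph) (Γ : Finset (NForm α)) : Prop :=
  G.verts = snames Γ ∧
  G.Br = BrS Γ ∧
  ∀ x y : ℕ, s(x, y) ∈ G.Edges →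
    ∀ a b : α, HasAtomS Γ x a → HasAtomS Γ y b → a = bar b

end GS4

/-!
The branches of `A` and of its negation behave like strategies of two opponents in a game: for
every set `S` of names, either `S` contains a branch of `A`, or its complement contains a branch of
the negation. Hence, for a fixed branch `X` of `Γ` and every set `S` of interface names, either `G`
has an edge labeled `X` off the interface whose interface endpoints lie in `S`, or `H` has one whose
interface endpoints lie outside `S`.

Choose one atom from every orbit of the involution and orient every edge away from its chosen
endpoint. The two orientations agree off the interface and are opposite on it, so a directed path
alternates between `G` and `H`. Were no sink off the interface reachable from a source off the
interface, the set of reachable vertices would determine an `S` violating the dichotomy.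
-/

namespace GS4

/-! ## Alternating paths -/

section Alternates

variable {V : Type*} {r s : V → V → Prop}

/-- The steps `z 0, z 1, …, z n` belong alternately to `r` and `s`, the first one to `r`. Here `n`
counts edges, whereas `AltPath` counts vertices. -/
def Alternates (r s : V → V → Prop) (n : ℕ) (z : ℕ → V) : Prop :=
  ∀ i < n, (Even i → r (z i) (z (i + 1))) ∧ (¬Even i → s (z i) (z (i + 1)))

theorem alternates_zero (z : ℕ → V) : Alternates r s 0 z := fun i hi => absurd hi i.not_lt_zero

theorem alternates_succ_iff {n : ℕ} {z : ℕ → V} :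
    Alternates r s (n + 1) z ↔ r (z 0) (z 1) ∧ Alternates s r n fun i => z (i + 1) := by
  refine ⟨fun h => ⟨(h 0 n.succ_pos).1 Even.zero, fun i hi => ?_⟩, ?_⟩
  · simpa only [Nat.even_add_one, not_not, and_comm] using h (i + 1) (Nat.succ_lt_succ hi)
  · rintro ⟨hz, h⟩ (_ | i) hi
    · exact ⟨fun _ => hz, fun h0 => (h0 Even.zero).elim⟩
    · simpa only [Nat.even_add_one, not_not, and_comm] using h i (Nat.lt_of_succ_lt_succ hi)

theorem Alternates.mono {r' s' : V → V → Prop} {n : ℕ} {z : ℕ → V} (hr : r ≤ r') (hs : s ≤ s')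
    (h : Alternates r s n z) : Alternates r' s' n z :=
  fun i hi => (h i hi).imp (fun h hi => hr _ _ (h hi)) (fun h hi => hs _ _ (h hi))

theorem Alternates.apply_zero_eq {β : Type*} {bar : β → β} (hbar : Function.Involutive bar)
    {f g : V → β} (hr : ∀ x y, r x y → f x = bar (f y)) (hs : ∀ x y, s x y → g x = bar (g y))
    {n : ℕ} {z : ℕ → V} (hn : 0 < n) (hz : Alternates r s n z)
    (hint : ∀ i, 0 < i → i < n → g (z i) = bar (f (z i))) (hlast : g (z n) = f (z n)) :
    f (z 0) = bar (f (z n)) := by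
  induction n, hn using Nat.le_induction generalizing r s f g z with
  | base => exact hr _ _ (alternates_succ_iff.1 hz).1
  | succ n hn ih =>
    obtain ⟨hfirst, htail⟩ := alternates_succ_iff.1 hz
    have hg : g (z 1) = bar (g (z (n + 1))) :=
      ih hs hr htail
        (fun i _ hi => by rw [hint (i + 1) i.succ_pos (Nat.succ_lt_succ hi), hbar]) hlast.symm
    calc f (z 0) = bar (f (z 1)) := hr _ _ hfirst
      _ = g (z 1) := (hint 1 one_pos (Nat.succ_lt_succ hn)).symm
      _ = bar (f (z (n + 1))) := by rw [hg, hlast]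

theorem alternates_of_chain (hr : ∀ x y w, r x y → ¬r y w) (hs : ∀ x y w, s x y → ¬s y w) {n : ℕ}
    {z : ℕ → V} (hz : ∀ i < n + 1, r (z i) (z (i + 1)) ∨ s (z i) (z (i + 1)))
    (hfirst : r (z 0) (z 1)) : Alternates r s (n + 1) z := by
  induction n generalizing r s z with
  | zero => exact alternates_succ_iff.2 ⟨hfirst, alternates_zero _⟩
  | succ n ih =>
    have hsecond : s (z 1) (z 2) := (hz 1 (by lia)).resolve_left (hr _ _ _ hfirst)
    exact alternates_succ_iff.2
      ⟨hfirst, ih hs hr (fun i hi => (hz (i + 1) (Nat.succ_lt_succ hi)).symm) hsecond⟩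

theorem exists_injOn_chain_of_reflTransGen {x y : V} (h : Relation.ReflTransGen r x y) :
    ∃ (n : ℕ) (z : ℕ → V), z 0 = x ∧ z n = y ∧ Set.InjOn z (Set.Iic n) ∧
      ∀ i < n, r (z i) (z (i + 1)) := by
  induction h using Relation.ReflTransGen.head_induction_on with
  | refl => exact ⟨0, fun _ => y, rfl, rfl, by simp [Set.InjOn], by simp⟩
  | @head a b hab _ ih =>
    obtain ⟨n, z, rfl, hlast, hinj, hz⟩ := ih
    by_cases ha : ∃ k ≤ n, z k = a
    · obtain ⟨k, hk, rfl⟩ := ha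
      refine ⟨n - k, fun i => z (k + i), rfl, by simpa only [Nat.add_sub_cancel' hk] using hlast,
        fun i hi j hj hij => ?_, fun i hi => hz (k + i) (by lia)⟩
      simp only [Set.mem_Iic] at hi hj
      exact Nat.add_left_cancel (hinj (Set.mem_Iic.2 (by lia)) (Set.mem_Iic.2 (by lia)) hij)
    · refine ⟨n + 1, fun i => Nat.casesOn i a z, rfl, hlast, ?_, ?_⟩
      · rintro (_ | i) hi (_ | j) hj hij
        · rfl
        · exact (ha ⟨j, Nat.le_of_succ_le_succ hj, hij.symm⟩).elim
        · exact (ha ⟨i, Nat.le_of_succ_le_succ hi, hij⟩).elim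
        · exact congrArg (· + 1)
            (hinj (Nat.le_of_succ_le_succ hi) (Nat.le_of_succ_le_succ hj) hij)
      · rintro (_ | i) hi
        exacts [hab, hz i (Nat.lt_of_succ_lt_succ hi)]

end Alternates

section Oriented

variable {V : Type*} {r s : V → V → Prop} {I p q : Set V}

/-- The edges of `r` directed away from their endpoint in `p`. It is applied to relations whose
edges have exactly one endpoint in `p`. -/
def Oriented (r : V → V → Prop) (p : Set V) (x y : V) : Prop := r x y ∧ x ∈ p ∧ y ∉ p

theorem Oriented.not_consecutive (x y w : V) (h : Oriented r p x y) : ¬Oriented r p y w :=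
  fun h' => h.2.2 h'.2.1

theorem exists_oriented [Std.Symm r] (hr : ∀ x y, r x y → (x ∈ p ↔ y ∉ p)) {S : Set V}
    (h : ∃ x ∈ S, ∃ y ∈ S, r x y) : ∃ x ∈ S, ∃ y ∈ S, Oriented r p x y := by
  obtain ⟨x, hx, y, hy, hxy⟩ := h
  by_cases hxp : x ∈ p
  · exact ⟨x, hx, y, hy, hxy, hxp, (hr x y hxy).1 hxp⟩
  · exact ⟨y, hy, x, hx, symm hxy, (hr y x (symm hxy)).2 hxp, hxp⟩

theorem exists_sink_mem_of_closed [Std.Symm r] [Std.Symm s]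
    (hr : ∀ x y, r x y → (x ∈ p ↔ y ∉ p)) (hs : ∀ x y, s x y → (x ∈ q ↔ y ∉ q))
    (hpq : ∀ x, (x ∈ p ↔ x ∈ q) ↔ x ∉ I)
    (hcut : ∀ S : Set V, (∃ x ∈ Iᶜ ∪ S, ∃ y ∈ Iᶜ ∪ S, r x y) ∨
      ∃ x ∈ Iᶜ ∪ Sᶜ, ∃ y ∈ Iᶜ ∪ Sᶜ, s x y)
    {R : Set V} (hsource : ∀ x ∉ I, x ∈ p → x ∈ R)
    (hclosed : ∀ x y, x ∈ R → (Oriented r p ⊔ Oriented s q) x y → y ∈ R) :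
    ∃ y ∉ I, y ∉ p ∧ y ∈ R := by
  by_contra! hsink
  -- Split the interface according to whether `R` agrees with `p`: then `R` agrees with `p` on one
  -- side and with `q` on the other, so neither side contains a directed edge.
  have hRp : ∀ x ∈ Iᶜ ∪ {v | v ∈ R ↔ v ∈ p}, x ∈ R ↔ x ∈ p := by
    rintro x (hx | hx)
    · exact ⟨fun hxR => not_not.1 fun hxp => hsink x hx hxp hxR, hsource x hx⟩
    · exact hx
  have hRq : ∀ x ∈ Iᶜ ∪ {v | v ∈ R ↔ v ∈ p}ᶜ, x ∈ R ↔ x ∈ q := by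
    rintro x (hx | hx)
    · exact (hRp x (.inl hx)).trans ((hpq x).2 hx)
    · have hxI : x ∈ I := not_not.1 fun hxI => hx (hRp x (.inl hxI))
      have hne : ¬(x ∈ p ↔ x ∈ q) := fun h => (hpq x).1 h hxI
      rw [Set.mem_compl_iff, Set.mem_ofPred_eq] at hx
      tauto
  rcases hcut {v | v ∈ R ↔ v ∈ p} with h | h
  · obtain ⟨x, hx, y, hy, hxy⟩ := exists_oriented hr h
    exact hxy.2.2 ((hRp y hy).1 (hclosed x y ((hRp x hx).2 hxy.2.1) (.inl hxy)))
  · obtain ⟨x, hx, y, hy, hxy⟩ := exists_oriented hs h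
    exact hxy.2.2 ((hRq y hy).1 (hclosed x y ((hRq x hx).2 hxy.2.1) (.inr hxy)))

theorem mem_of_oriented_consecutive (hpq : ∀ x ∉ I, x ∈ p ↔ x ∈ q) {x y w : V}
    (hxy : (Oriented r p ⊔ Oriented s q) x y) (hyw : (Oriented r p ⊔ Oriented s q) y w) :
    y ∈ I := by
  by_contra hy
  have := hpq y hy
  rcases hxy with ⟨-, -, h⟩ | ⟨-, -, h⟩ <;> rcases hyw with ⟨-, h', -⟩ | ⟨-, h', -⟩ <;> tauto

theorem alternates_of_oriented_chain {n : ℕ} {z : ℕ → V}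
    (hz : ∀ i < n + 1, (Oriented r p ⊔ Oriented s q) (z i) (z (i + 1))) :
    Alternates r s (n + 1) z ∨ Alternates s r (n + 1) z := by
  have hle : ∀ {r : V → V → Prop} {p : Set V}, Oriented r p ≤ r := fun _ _ h => h.1
  exact (hz 0 n.succ_pos).imp
    (fun h => (alternates_of_chain Oriented.not_consecutive Oriented.not_consecutive hz h).mono
      hle hle)
    (fun h => (alternates_of_chain Oriented.not_consecutive Oriented.not_consecutive
      (fun i hi => (hz i hi).symm) h).mono hle hle)

theorem exists_alternates_of_cut [Std.Symm r] [Std.Symm s]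
    (hr : ∀ x y, r x y → (x ∈ p ↔ y ∉ p)) (hs : ∀ x y, s x y → (x ∈ q ↔ y ∉ q))
    (hpq : ∀ x, (x ∈ p ↔ x ∈ q) ↔ x ∉ I)
    (hcut : ∀ S : Set V, (∃ x ∈ Iᶜ ∪ S, ∃ y ∈ Iᶜ ∪ S, r x y) ∨
      ∃ x ∈ Iᶜ ∪ Sᶜ, ∃ y ∈ Iᶜ ∪ Sᶜ, s x y) :
    ∃ (n : ℕ) (z : ℕ → V), 0 < n ∧ Set.InjOn z (Set.Iic n) ∧ (∀ i, 0 < i → i < n → z i ∈ I) ∧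
      (Alternates r s n z ∨ Alternates s r n z) ∧ z 0 ∉ I ∧ z n ∉ I := by
  obtain ⟨y, hyI, hyp, x, hxI, hxp, hxy⟩ := exists_sink_mem_of_closed hr hs hpq hcut
    (R := {y | ∃ x ∉ I, x ∈ p ∧ Relation.ReflTransGen (Oriented r p ⊔ Oriented s q) x y})
    (fun x hxI hxp => ⟨x, hxI, hxp, .refl⟩)
    (fun x y ⟨w, hwI, hwp, hwx⟩ hxy => ⟨w, hwI, hwp, hwx.tail hxy⟩)
  obtain ⟨n, z, rfl, rfl, hinj, hz⟩ := exists_injOn_chain_of_reflTransGen hxy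
  cases n with
  | zero => exact (hyp hxp).elim
  | succ n =>
    refine ⟨n + 1, z, n.succ_pos, hinj, ?_, alternates_of_oriented_chain hz, hxI, hyI⟩
    rintro (_ | i) hi hin
    · exact hi.false.elim
    · exact mem_of_oriented_consecutive (fun x => (hpq x).2)
        (hz i (Nat.lt_of_succ_lt hin)) (hz (i + 1) hin)

end Oriented

theorem exists_mem_bar_iff_notMem {β : Type*} {bar : β → β} (hbar : Function.Involutive bar)
    (hfix : ∀ a, bar a ≠ a) : ∃ P : Set β, ∀ a, bar a ∈ P ↔ a ∉ P := by
  refine ⟨{a | WellOrderingRel a (bar a)}, fun a => ?_⟩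
  simp only [Set.mem_ofPred_eq, hbar a]
  exact ⟨asymm_of WellOrderingRel, fun h =>
    ((trichotomous_of WellOrderingRel a (bar a)).resolve_left h).resolve_left (hfix a).symm⟩

/-! ## Adjacency relative to an interface -/

/-- Adjacency through the edges labeled by `X` relative to the interface `I`. -/
def BLGraph.AdjI (G : BLGraph) (I X : Set ℕ) (x y : ℕ) : Prop := G.relI I s(x, y) X

instance (G : BLGraph) (I X : Set ℕ) : Std.Symm (G.AdjI I X) where
  symm x y h := by rwa [BLGraph.AdjI, Sym2.eq_swap]

theorem altPath_succ_iff {G H : BLGraph} {I X : Set ℕ} {n : ℕ} {z : ℕ → ℕ} :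
    AltPath G H I X (n + 1) z ↔
      0 < n ∧ Set.InjOn z (Set.Iic n) ∧ (∀ i, 0 < i → i < n → z i ∈ I) ∧
      (Alternates (G.AdjI I X) (H.AdjI I X) n z ∨
        Alternates (H.AdjI I X) (G.AdjI I X) n z) := by
  simp only [AltPath, Alternates, BLGraph.AdjI, Set.InjOn, Set.mem_Iic, Nat.lt_succ_iff,
    Nat.add_one_le_iff]

theorem BLGraph.comp_rel_iff {G H : BLGraph} {I X : Set ℕ} {e : Sym2 ℕ} :
    (G.comp H I).rel e X ↔ ∃ (n : ℕ) (z : ℕ → ℕ),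
      (0 < n ∧ Set.InjOn z (Set.Iic n) ∧ (∀ i, 0 < i → i < n → z i ∈ I) ∧
        (Alternates (G.AdjI I X) (H.AdjI I X) n z ∨
          Alternates (H.AdjI I X) (G.AdjI I X) n z)) ∧
      z 0 ∉ I ∧ z n ∉ I ∧ e = s(z 0, z n) := by
  constructor
  · rintro ⟨_ | n, z, hz, hends⟩
    · exact absurd hz.1 (by lia)
    · exact ⟨n, z, altPath_succ_iff.1 hz, hends⟩
  · rintro ⟨n, z, hz, hends⟩
    exact ⟨n + 1, z, altPath_succ_iff.2 hz, hends⟩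

theorem BLGraph.ne_of_comp_rel {G H : BLGraph} {I X : Set ℕ} {x y : ℕ}
    (h : (G.comp H I).rel s(x, y) X) : x ≠ y := by
  obtain ⟨n, z, ⟨hn, hinj, -⟩, -, -, hxy⟩ := BLGraph.comp_rel_iff.1 h
  have hne : z 0 ≠ z n := hinj.ne (Set.mem_Iic.2 hn.le) (Set.mem_Iic.2 le_rfl) hn.ne
  rcases Sym2.eq_iff.1 hxy with ⟨rfl, rfl⟩ | ⟨rfl, rfl⟩
  exacts [hne, hne.symm]

/-! ## Formulas and sequents -/

variable {α : Type}

theorem names_negF (bar : α → α) (A : NForm α) : (negF bar A).names = A.names := by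
  induction A with
  | atom x a => rfl
  | or A B ihA ihB | and A B ihA ihB => exact congrArg₂ (· ∪ ·) ihA ihB

theorem NForm.nonempty_atoms (A : NForm α) : Nonempty α := by
  induction A with
  | atom _ a => exact ⟨a⟩
  | or _ _ ih _ | and _ _ ih _ => exact ih

theorem HasAtom.mem_names {A : NForm α} {x : ℕ} {a : α} (h : HasAtom A x a) : x ∈ A.names := by
  induction A with
  | atom y b => exact h.1.symm
  | or A B ihA ihB | and A B ihA ihB => exact h.imp ihA ihB

theorem exists_hasAtom {A : NForm α} {x : ℕ} (h : x ∈ A.names) : ∃ a, HasAtom A x a := by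
  induction A with
  | atom y b => exact ⟨b, h.symm, rfl⟩
  | or A B ihA ihB | and A B ihA ihB => exact exists_or.2 (h.imp ihA ihB)

theorem HasAtom.negF {A : NForm α} {x : ℕ} {a : α} (bar : α → α) (h : HasAtom A x a) :
    HasAtom (negF bar A) x (bar a) := by
  induction A with
  | atom y c => exact ⟨h.1, congrArg bar h.2⟩
  | or A B ihA ihB | and A B ihA ihB => exact h.imp ihA ihB

theorem subset_names_of_mem_BrF {A : NForm α} {X : Set ℕ} (h : X ∈ BrF A) : X ⊆ A.names := by
  induction A generalizing X with
  | atom y c => exact (Set.mem_singleton_iff.1 h).subset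
  | or A B ihA ihB =>
    obtain ⟨Y, hY, Z, hZ, rfl⟩ := h
    exact Set.union_subset_union (ihA hY) (ihB hZ)
  | and A B ihA ihB =>
    exact h.elim (fun h => (ihA h).trans Set.subset_union_left)
      (fun h => (ihB h).trans Set.subset_union_right)

theorem exists_mem_BrF_subset_or_exists_mem_BrF_negF_subset_compl (bar : α → α) (A : NForm α)
    (S : Set ℕ) : (∃ Y ∈ BrF A, Y ⊆ S) ∨ ∃ Z ∈ BrF (negF bar A), Z ⊆ Sᶜ := by
  induction A with
  | atom x a => simpa [BrF, negF] using em (x ∈ S)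
  | or A B ihA ihB =>
    rcases ihA with ⟨Y, hY, hYS⟩ | ⟨Z, hZ, hZS⟩
    · rcases ihB with ⟨Y', hY', hYS'⟩ | ⟨Z, hZ, hZS⟩
      · exact .inl ⟨_, ⟨Y, hY, Y', hY', rfl⟩, Set.union_subset hYS hYS'⟩
      · exact .inr ⟨Z, .inr hZ, hZS⟩
    · exact .inr ⟨Z, .inl hZ, hZS⟩
  | and A B ihA ihB =>
    rcases ihA with ⟨Y, hY, hYS⟩ | ⟨Z, hZ, hZS⟩
    · exact .inl ⟨Y, .inl hY, hYS⟩
    · rcases ihB with ⟨Y, hY, hYS⟩ | ⟨Z', hZ', hZS'⟩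
      · exact .inl ⟨Y, .inr hY, hYS⟩
      · exact .inr ⟨_, ⟨Z, hZ, Z', hZ', rfl⟩, Set.union_subset hZS hZS'⟩

section Sequent

variable {bar : α → α} {A : NForm α} {Γ : Finset (NForm α)}

theorem snames_insert (A : NForm α) (Γ : Finset (NForm α)) :
    snames (insert A Γ) = A.names ∪ snames Γ := by
  simp [snames]

theorem names_subset_snames (hA : A ∈ Γ) : A.names ⊆ snames Γ :=
  Set.subset_biUnion_of_mem (u := fun B : NForm α => B.names) hA

theorem HasAtomS.mono {Δ : Finset (NForm α)} (hΓΔ : Γ ⊆ Δ) {x : ℕ} {a : α} (h : HasAtomS Γ x a) :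
    HasAtomS Δ x a :=
  h.imp fun _ hB => ⟨hΓΔ hB.1, hB.2⟩

theorem sdiff_names_mem_BrS (hd : Disjoint A.names (snames Γ)) {Y : Set ℕ}
    (hY : Y ∈ BrS (insert A Γ)) : Y \ A.names ∈ BrS Γ := by
  refine ⟨?_, fun B hB => ?_⟩
  · rw [Set.sdiff_subset_iff, ← snames_insert]
    exact hY.1
  · have hYB : Y \ A.names ∩ B.names = Y ∩ B.names := by
      rw [Set.sdiff_inter_right_comm]
      exact (hd.symm.mono_left
        (Set.inter_subset_right.trans (names_subset_snames hB))).sdiff_eq_left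
    exact hYB ▸ hY.2 B (Finset.mem_insert_of_mem hB)

theorem union_mem_BrS_insert (hd : Disjoint A.names (snames Γ)) {X Y : Set ℕ} (hX : X ∈ BrS Γ)
    (hY : Y ∈ BrF A) : X ∪ Y ∈ BrS (insert A Γ) := by
  have hYA := subset_names_of_mem_BrF hY
  refine ⟨?_, fun B hB => ?_⟩
  · rw [snames_insert, Set.union_comm]
    exact Set.union_subset_union hYA hX.1
  · rw [Set.union_inter_distrib_right]
    rcases Finset.mem_insert.1 hB with rfl | hB
    · rwa [(hd.symm.mono_left hX.1).inter_eq, Set.empty_union, Set.inter_eq_left.2 hYA]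
    · rw [(hd.mono hYA (names_subset_snames hB)).inter_eq, Set.union_empty]
      exact hX.2 B hB

/-- `φ` assigns to every name of `Γ` an atom it carries there. For sharing-free `Γ` this is the
function `x ↦ Γ[x]`; in general a name may carry several atoms, and `φ` picks one of them. -/
def IsAtomChoice (Γ : Finset (NForm α)) (φ : ℕ → α) : Prop := ∀ x ∈ snames Γ, HasAtomS Γ x (φ x)

theorem exists_isAtomChoice [Nonempty α] (Γ : Finset (NForm α)) : ∃ φ, IsAtomChoice Γ φ := by
  have hatom : ∀ x ∈ snames Γ, ∃ a, HasAtomS Γ x a := fun x hx => by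
    obtain ⟨A, hA, hxA⟩ := Set.mem_iUnion₂.1 hx
    exact (exists_hasAtom hxA).imp fun a ha => ⟨A, hA, ha⟩
  choose! φ hφ using hatom
  exact ⟨φ, hφ⟩

theorem IsAtomChoice.update {φ : ℕ → α} (hφ : IsAtomChoice Γ φ) {x : ℕ} {a : α}
    (ha : HasAtomS Γ x a) : IsAtomChoice Γ (Function.update φ x a) := by
  intro y hy
  rcases eq_or_ne y x with rfl | hyx
  · rwa [Function.update_self]
  · rw [Function.update_of_ne hyx]
    exact hφ y hy

theorem exists_isAtomChoice_eq_eq {x y : ℕ} (hxy : x ≠ y) {a b : α} (ha : HasAtomS Γ x a)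
    (hb : HasAtomS Γ y b) : ∃ φ, IsAtomChoice Γ φ ∧ φ x = a ∧ φ y = b := by
  have : Nonempty α := ⟨a⟩
  obtain ⟨φ, hφ⟩ := exists_isAtomChoice Γ
  exact ⟨_, (hφ.update ha).update hb,
    by rw [Function.update_of_ne hxy, Function.update_self], Function.update_self ..⟩

theorem IsAtomChoice.piecewise_bar {φ : ℕ → α} (hφ : IsAtomChoice (insert A Γ) φ)
    (hd : Disjoint A.names (snames Γ)) :
    IsAtomChoice (insert (negF bar A) Γ) (A.names.piecewise (bar ∘ φ) φ) := by
  intro x hx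
  rw [snames_insert, names_negF, ← snames_insert] at hx
  obtain ⟨B, hB, hBx⟩ := hφ x hx
  rcases Finset.mem_insert.1 hB with rfl | hB
  · rw [Set.piecewise_eq_of_mem _ _ _ hBx.mem_names]
    exact ⟨_, Finset.mem_insert_self _ _, hBx.negF bar⟩
  · have hxA : x ∉ A.names := Set.disjoint_right.1 hd (names_subset_snames hB hBx.mem_names)
    rw [Set.piecewise_eq_of_notMem _ _ _ hxA]
    exact ⟨B, Finset.mem_insert_of_mem hB, hBx⟩

end Sequent

/-! ## Totality -/

section Total

variable {bar : α → α} {A : NForm α} {Γ : Finset (NForm α)} {G H : BLGraph} {X : Set ℕ}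

theorem Total.mem_BrS_of_adjI (ht : Total bar G (insert A Γ)) (hd : Disjoint A.names (snames Γ))
    {x y : ℕ} (h : G.AdjI A.names X x y) : X ∈ BrS Γ := by
  obtain ⟨Y, hY, rfl⟩ := h
  exact sdiff_names_mem_BrS hd (ht.2.1 ▸ ⟨_, hY⟩)

theorem Total.exists_adjI (ht : Total bar G (insert A Γ)) (hG : G.IsBL)
    (hd : Disjoint A.names (snames Γ)) (hX : X ∈ BrS Γ) {S : Set ℕ}
    (hS : ∃ Y ∈ BrF A, Y ⊆ S) :
    ∃ x ∈ A.namesᶜ ∪ S, ∃ y ∈ A.namesᶜ ∪ S, G.AdjI A.names X x y := by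
  obtain ⟨Y, hY, hYS⟩ := hS
  have hXA : Disjoint X A.names := hd.symm.mono_left hX.1
  obtain ⟨⟨x, y⟩, hxy⟩ : X ∪ Y ∈ G.Br := ht.2.1 ▸ union_mem_BrS_insert hd hX hY
  have hmem : ∀ v ∈ s(x, y), v ∈ A.namesᶜ ∪ S := fun v hv =>
    Set.union_subset_union hXA.subset_compl_right hYS ((hG _ _ hxy).2.2 v hv)
  refine ⟨x, hmem x (Sym2.mem_mk_left x y), y, hmem y (Sym2.mem_mk_right x y), X ∪ Y, hxy, ?_⟩
  rw [Set.union_sdiff_distrib, hXA.sdiff_eq_left,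
    Set.sdiff_eq_empty.2 (subset_names_of_mem_BrF hY), Set.union_empty]

theorem Total.eq_bar_of_adjI (ht : Total bar G Γ) (hG : G.IsBL) {φ : ℕ → α}
    (hφ : IsAtomChoice Γ φ) {I : Set ℕ} {x y : ℕ} (h : G.AdjI I X x y) : φ x = bar (φ y) := by
  obtain ⟨Y, hxy, -⟩ := h
  obtain ⟨-, hYV, hmem⟩ := hG _ _ hxy
  have hnames : ∀ v ∈ s(x, y), v ∈ snames Γ := fun v hv => ht.1 ▸ hYV (hmem v hv)
  exact ht.2.2 x y ⟨Y, hxy⟩ _ _ (hφ x (hnames x (Sym2.mem_mk_left x y)))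
    (hφ y (hnames y (Sym2.mem_mk_right x y)))

theorem Total.verts_comp (htG : Total bar G (insert A Γ))
    (htH : Total bar H (insert (negF bar A) Γ)) (hd : Disjoint A.names (snames Γ)) :
    (G.comp H A.names).verts = snames Γ := by
  change (G.verts ∪ H.verts) \ A.names = snames Γ
  rw [htG.1, htH.1, snames_insert, snames_insert, names_negF, Set.union_self,
    Set.union_sdiff_left, hd.symm.sdiff_eq_left]

theorem Total.Br_comp_subset (htG : Total bar G (insert A Γ))
    (htH : Total bar H (insert (negF bar A) Γ)) (hd : Disjoint A.names (snames Γ)) :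
    (G.comp H A.names).Br ⊆ BrS Γ := by
  rintro X ⟨e, he⟩
  obtain ⟨n, z, ⟨hn, -, -, hG | hH⟩, -⟩ := BLGraph.comp_rel_iff.1 he
  · exact htG.mem_BrS_of_adjI hd ((hG 0 hn).1 Even.zero)
  · rw [← names_negF bar A] at hd hH
    exact htH.mem_BrS_of_adjI hd ((hH 0 hn).1 Even.zero)

theorem Total.subset_Br_comp (hbar : Function.Involutive bar) (hfix : ∀ a, bar a ≠ a)
    (htG : Total bar G (insert A Γ)) (htH : Total bar H (insert (negF bar A) Γ))
    (hG : G.IsBL) (hH : H.IsBL) (hd : Disjoint A.names (snames Γ)) :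
    BrS Γ ⊆ (G.comp H A.names).Br := by
  intro X hX
  have := A.nonempty_atoms
  obtain ⟨φ, hφ⟩ := exists_isAtomChoice (insert A Γ)
  obtain ⟨P, hP⟩ := exists_mem_bar_iff_notMem hbar hfix
  have hcut : ∀ S : Set ℕ,
      (∃ x ∈ A.namesᶜ ∪ S, ∃ y ∈ A.namesᶜ ∪ S, G.AdjI A.names X x y) ∨
        ∃ x ∈ A.namesᶜ ∪ Sᶜ, ∃ y ∈ A.namesᶜ ∪ Sᶜ, H.AdjI A.names X x y := fun S =>
    (exists_mem_BrF_subset_or_exists_mem_BrF_negF_subset_compl bar A S).imp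
      (htG.exists_adjI hG hd hX)
      fun hZ => by simpa only [names_negF] using
        htH.exists_adjI hH (by rwa [names_negF]) hX hZ
  obtain ⟨n, z, hn, hinj, hint, halt, hends⟩ :=
    exists_alternates_of_cut (p := φ ⁻¹' P) (q := A.names.piecewise (bar ∘ φ) φ ⁻¹' P)
      (fun x y h => by
        rw [Set.mem_preimage, htG.eq_bar_of_adjI hG hφ h, hP, Set.mem_preimage])
      (fun x y h => by
        rw [Set.mem_preimage, htH.eq_bar_of_adjI hH (hφ.piecewise_bar hd) h, hP, Set.mem_preimage])
      (fun x => by by_cases hx : x ∈ A.names <;> simp [hx, hP])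
      hcut
  exact ⟨_, BLGraph.comp_rel_iff.2
    ⟨n, z, ⟨hn, hinj, hint, halt⟩, hends.1, hends.2, rfl⟩⟩

theorem Total.eq_bar_of_comp_rel (hbar : Function.Involutive bar)
    (htG : Total bar G (insert A Γ)) (htH : Total bar H (insert (negF bar A) Γ))
    (hG : G.IsBL) (hH : H.IsBL) (hd : Disjoint A.names (snames Γ)) {φ : ℕ → α}
    (hφ : IsAtomChoice (insert A Γ) φ) {x y : ℕ} (h : (G.comp H A.names).rel s(x, y) X) :
    φ x = bar (φ y) := by
  obtain ⟨n, z, ⟨hn, -, hint, halt⟩, hfirst, hlast, hxy⟩ := BLGraph.comp_rel_iff.1 h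
  let ψ := A.names.piecewise (bar ∘ φ) φ
  have hψ_int : ∀ i, 0 < i → i < n → ψ (z i) = bar (φ (z i)) := fun i hi hin =>
    Set.piecewise_eq_of_mem _ _ _ (hint i hi hin)
  have hψ_end : ∀ v ∉ A.names, ψ v = φ v := fun v => Set.piecewise_eq_of_notMem _ _ _
  have hG' : ∀ v w, G.AdjI A.names X v w → φ v = bar (φ w) := fun _ _ => htG.eq_bar_of_adjI hG hφ
  have hH' : ∀ v w, H.AdjI A.names X v w → ψ v = bar (ψ w) := fun _ _ =>
    htH.eq_bar_of_adjI hH (hφ.piecewise_bar hd)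
  have hends : φ (z 0) = bar (φ (z n)) := by
    rcases halt with halt | halt
    · exact halt.apply_zero_eq hbar hG' hH' hn hψ_int (hψ_end _ hlast)
    · rw [← hψ_end _ hfirst, ← hψ_end _ hlast]
      exact halt.apply_zero_eq hbar hH' hG' hn
        (fun i hi hin => by rw [hψ_int i hi hin, hbar]) (hψ_end _ hlast).symm
  rcases Sym2.eq_iff.1 hxy with ⟨rfl, rfl⟩ | ⟨rfl, rfl⟩
  · exact hends
  · rw [hends, hbar]

theorem Total.eq_bar_of_mem_Edges_comp (hbar : Function.Involutive bar)
    (htG : Total bar G (insert A Γ)) (htH : Total bar H (insert (negF bar A) Γ))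
    (hG : G.IsBL) (hH : H.IsBL) (hd : Disjoint A.names (snames Γ)) {x y : ℕ}
    (hxy : s(x, y) ∈ (G.comp H A.names).Edges) {a b : α} (ha : HasAtomS Γ x a)
    (hb : HasAtomS Γ y b) : a = bar b := by
  obtain ⟨X, hX⟩ := hxy
  have hΓ : Γ ⊆ insert A Γ := Finset.subset_insert A Γ
  obtain ⟨φ, hφ, rfl, rfl⟩ :=
    exists_isAtomChoice_eq_eq (BLGraph.ne_of_comp_rel hX) (ha.mono hΓ) (hb.mono hΓ)
  exact htG.eq_bar_of_comp_rel hbar htH hG hH hd hφ hX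

end Total

theorem comp_total_general {bar : α → α} (hbar : Function.Involutive bar)
    (hfix : ∀ a, bar a ≠ a) {Γ : Finset (NForm α)} {A : NForm α}
    (hd : Disjoint A.names (snames Γ)) {G H : BLGraph} (hG : G.IsBL) (hH : H.IsBL)
    (htG : Total bar G (insert A Γ)) (htH : Total bar H (insert (negF bar A) Γ)) :
    Total bar (G.comp H A.names) Γ :=
  ⟨htG.verts_comp htH hd,
    (htG.Br_comp_subset htH hd).antisymm (htG.subset_Br_comp hbar hfix htH hG hH hd),
    fun _ _ hxy _ _ ha hb => htG.eq_bar_of_mem_Edges_comp hbar htH hG hH hd hxy ha hb⟩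

end GS4

/-- composition over a cut-formula preserves totality. -/
theorem GS4.comp_total {α : Type} (bar : α → α)
    (hbar : Function.Involutive bar) (hfix : ∀ a, bar a ≠ a)
    (Γ : Finset (GS4.NForm α)) (A : GS4.NForm α)
    (hΓ : GS4.SFSet Γ) (hA : A.sharingFree)
    (hd : Disjoint A.names (GS4.snames Γ))
    (hAΓ : A ∉ Γ) (hAΓ' : GS4.negF bar A ∉ Γ)
    (G H : GS4.BLGraph) (hG : G.IsBL) (hH : H.IsBL)
    (htG : GS4.Total bar G (insert A Γ))
    (htH : GS4.Total bar H (insert (GS4.negF bar A) Γ)) :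
    GS4.Total bar (G.comp H A.names) Γ :=
  GS4.comp_total_general hbar hfix hd hG hH htG htH
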